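/- arXiv:2008.06401 — 3 statements merged into one kernel-verified Lean document; each statement's English description precedes it below -/
import Mathlib

section
/- For every non-negative integer k and every non-negative integer n, the number of (5k+1)-colour partitions of 5n+4 is divisible by 5; that is, p_{5k+1}(5n+4) ≡ 0 (mod 5). -/
/-- `colouredPartitions r n` is the number of `r`-colour partitions of `n`:
multisets of pairs `(m, c)` with `m` a positive integer part and `c` one of `r`
colours, whose parts (first components, with multiplicity) sum to `n`.  Such a
multiset is encoded by its multiplicity function `f : ℕ+ × Fin r →₀ ℕ`. -/
noncomputable def colouredPartitions (r n : ℕ) : ℕ :=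
  Nat.card {f : ℕ+ × Fin r →₀ ℕ // (f.sum fun x m => (x.1 : ℕ) * m) = n}

/-!
Let `E = ∏ (1 - X ^ m)`. Modulo 5 the generating function `E⁻¹ ^ (5 * k + 1)` equals
`E * E ^ 3 * (E⁻¹ ^ (k + 1)) ^ 5`, whose last factor is a series in `X ^ 5`; so it suffices that the
coefficients of `E * E ^ 3` at exponents `≡ 4 [MOD 5]` vanish. Euler's and Jacobi's identities write
`E * E ^ 3` as the sum over `k m : ℤ` of `(-1) ^ k * (4 * m + 1) * X ^ N`, where
`N = k * (3 * k - 1) / 2 + m * (2 * m + 1)`. With `a = 6 * k - 1` and `b = 4 * m + 1` we have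
`a ^ 2 + 3 * b ^ 2 = 24 * N + 4`, so `N ≡ 4 [MOD 5]` forces `5 ∣ a ^ 2 + 3 * b ^ 2`, hence `5 ∣ b`
because `-3` is not a square modulo 5.

Jacobi's identity `J = E ^ 3` follows from `E * J' = 3 * J * E'`: the terms of the double sum
`X * (E * J' - 3 * J * E')` cancel in pairs under a rotation of `a + b * √-3` by a sixth of a turn
combined with sign changes of `a` and `b`, which preserves the exponent.
-/

open PowerSeries

section FiberSeries

variable {ι κ R : Type*}

/-- The power series `∑ i, c i * X ^ e i`. Its coefficients are finite sums when `e` has finite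
fibres, which the lemmas below assume in the form `Northcott e`; otherwise `∑ᶠ` may take its junk
value `0`. -/
noncomputable def fiberSeries [Semiring R] (e : ι → ℕ) (c : ι → R) : R⟦X⟧ :=
  mk fun n ↦ ∑ᶠ i ∈ e ⁻¹' {n}, c i

theorem finite_preimage_singleton_of_northcott (e : ι → ℕ) [Northcott e] (n : ℕ) :
    (e ⁻¹' {n}).Finite :=
  (Northcott.finite_le (h := e) n).subset fun _ hi ↦ le_of_eq hi

theorem northcott_of_injective {e : ι → ℕ} (he : e.Injective) : Northcott e :=
  ⟨fun n ↦ (Set.finite_Iic n).preimage he.injOn⟩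

instance northcott_prod_add (e : ι → ℕ) (e' : κ → ℕ) [Northcott e] [Northcott e'] :
    Northcott fun x : ι × κ ↦ e x.1 + e' x.2 where
  finite_le n := ((Northcott.finite_le (h := e) n).prod (Northcott.finite_le (h := e') n)).subset
    fun _ hx ↦ ⟨(Nat.le_add_right _ _).trans hx, (Nat.le_add_left _ _).trans hx⟩

instance northcott_pi_sum [Fintype κ] (e : ι → ℕ) [Northcott e] :
    Northcott fun x : κ → ι ↦ ∑ j, e (x j) where
  finite_le n := (Set.Finite.pi' fun _ : κ ↦ Northcott.finite_le (h := e) n).subset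
    fun x hx j ↦ (Finset.single_le_sum_of_canonicallyOrdered
      (f := fun j ↦ e (x j)) (Finset.mem_univ j)).trans hx

section Semiring

variable [Semiring R]

theorem coeff_fiberSeries (e : ι → ℕ) (c : ι → R) (n : ℕ) :
    coeff n (fiberSeries e c) = ∑ᶠ i ∈ e ⁻¹' {n}, c i :=
  coeff_mk _ _

theorem coeff_fiberSeries_of_injective {e : ι → ℕ} (he : e.Injective) (c : ι → R) (i : ι) :
    coeff (e i) (fiberSeries e c) = c i := by
  have hfiber : e ⁻¹' {e i} = {i} := by ext j; simp [he.eq_iff]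
  rw [coeff_fiberSeries, hfiber, finsum_mem_singleton]

theorem coeff_fiberSeries_of_notMem_range {e : ι → ℕ} {n : ℕ} (hn : n ∉ Set.range e)
    (c : ι → R) : coeff n (fiberSeries e c) = 0 := by
  rw [coeff_fiberSeries, Set.preimage_singleton_eq_empty.2 hn, finsum_mem_empty]

theorem fiberSeries_comp_equiv (σ : κ ≃ ι) (e : ι → ℕ) (c : ι → R) :
    fiberSeries (e ∘ σ) (c ∘ σ) = fiberSeries e c := by
  ext n
  rw [coeff_fiberSeries, coeff_fiberSeries]
  exact finsum_comp_equiv σ (f := fun i ↦ ∑ᶠ _ : i ∈ e ⁻¹' {n}, c i)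

theorem fiberSeries_one (e : ι → ℕ) [Northcott e] :
    fiberSeries e (fun _ ↦ (1 : R)) = mk fun n ↦ ((e ⁻¹' {n}).ncard : R) := by
  ext n
  have hfin := finite_preimage_singleton_of_northcott e n
  rw [coeff_fiberSeries, coeff_mk, finsum_mem_eq_finite_toFinset_sum _ hfin,
    Set.ncard_eq_toFinset_card _ hfin, Finset.sum_const, nsmul_one]

theorem map_fiberSeries {S : Type*} [Semiring S] (φ : R →+* S) (e : ι → ℕ) [Northcott e]
    (c : ι → R) : (fiberSeries e c).map φ = fiberSeries e (φ ∘ c) := by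
  ext n
  rw [coeff_map, coeff_fiberSeries, coeff_fiberSeries]
  exact φ.toAddMonoidHom.map_finsum_mem _ (finite_preimage_singleton_of_northcott e n)

theorem C_mul_fiberSeries (a : R) (e : ι → ℕ) [Northcott e] (c : ι → R) :
    C a * fiberSeries e c = fiberSeries e fun i ↦ a * c i := by
  ext n
  rw [coeff_C_mul, coeff_fiberSeries, coeff_fiberSeries,
    mul_finsum_mem' _ _ (finite_preimage_singleton_of_northcott e n)]

theorem fiberSeries_mul_fiberSeries (e : ι → ℕ) (e' : κ → ℕ) [Northcott e] [Northcott e']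
    (c : ι → R) (d : κ → R) :
    fiberSeries e c * fiberSeries e' d =
      fiberSeries (fun x : ι × κ ↦ e x.1 + e' x.2) fun x ↦ c x.1 * d x.2 := by
  classical
  ext n
  have hfin := finite_preimage_singleton_of_northcott e
  have hfin' := finite_preimage_singleton_of_northcott e'
  have hfinAdd := finite_preimage_singleton_of_northcott (fun x : ι × κ ↦ e x.1 + e' x.2) n
  have hmaps : ∀ x ∈ hfinAdd.toFinset,
      (e x.1, e' x.2) ∈ Finset.HasAntidiagonal.antidiagonal n := by simp
  rw [coeff_mul, coeff_fiberSeries, finsum_mem_eq_finite_toFinset_sum _ hfinAdd,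
    ← Finset.sum_fiberwise_of_maps_to hmaps]
  refine Finset.sum_congr rfl fun p hp ↦ ?_
  have hfiber : {x ∈ hfinAdd.toFinset | (e x.1, e' x.2) = p} =
      (hfin p.1).toFinset ×ˢ (hfin' p.2).toFinset := by
    ext x
    rw [Finset.HasAntidiagonal.mem_antidiagonal] at hp
    simp only [Finset.mem_filter, Set.Finite.mem_toFinset, Set.mem_preimage,
      Set.mem_singleton_iff, Finset.mem_product, Prod.ext_iff]
    lia
  rw [hfiber, coeff_fiberSeries, coeff_fiberSeries, finsum_mem_eq_finite_toFinset_sum _ (hfin _),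
    finsum_mem_eq_finite_toFinset_sum _ (hfin' _), Finset.sum_mul_sum, Finset.sum_product]

end Semiring

theorem fiberSeries_pow [CommSemiring R] (e : ι → ℕ) [Northcott e] (c : ι → R) (r : ℕ) :
    fiberSeries e c ^ r =
      fiberSeries (fun x : Fin r → ι ↦ ∑ j, e (x j)) fun x ↦ ∏ j, c (x j) := by
  induction r with
  | zero =>
    have hinj : (fun x : Fin 0 → ι ↦ ∑ j, e (x j)).Injective :=
      Function.injective_of_subsingleton _
    ext n
    rcases eq_or_ne n 0 with rfl | hn
    · simpa using (coeff_fiberSeries_of_injective hinj (fun x ↦ ∏ j, c (x j)) Fin.elim0).symm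
    · rw [pow_zero, coeff_one, if_neg hn, coeff_fiberSeries_of_notMem_range]
      simpa using hn
  | succ r ih =>
    rw [pow_succ', ih, fiberSeries_mul_fiberSeries,
      ← fiberSeries_comp_equiv (Fin.consEquiv fun _ ↦ ι)]
    congr 1 <;> ext x
    · simp [Fin.sum_univ_succ]
    · simp [Fin.prod_univ_succ]

theorem coeff_X_mul_derivative [CommSemiring R] (f : R⟦X⟧) (n : ℕ) :
    coeff n (X * d⁄dX R f) = n * coeff n f := by
  cases n with
  | zero => simp
  | succ n => rw [coeff_succ_X_mul, coeff_derivative, mul_comm, Nat.cast_succ]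

theorem X_mul_derivative_fiberSeries [CommSemiring R] (e : ι → ℕ) [Northcott e] (c : ι → R) :
    X * d⁄dX R (fiberSeries e c) = fiberSeries e fun i ↦ e i * c i := by
  ext n
  rw [coeff_X_mul_derivative, coeff_fiberSeries, coeff_fiberSeries,
    mul_finsum_mem' _ _ (finite_preimage_singleton_of_northcott e n)]
  exact finsum_mem_congr rfl fun i hi ↦ by rw [show e i = n from hi]

theorem fiberSeries_sub [Ring R] (e : ι → ℕ) [Northcott e] (c d : ι → R) :
    fiberSeries e (fun i ↦ c i - d i) = fiberSeries e c - fiberSeries e d := by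
  ext n
  simp only [map_sub, coeff_fiberSeries]
  exact finsum_mem_sub_distrib _ _ (finite_preimage_singleton_of_northcott e n)

theorem fiberSeries_eq_zero_of_perm_neg [Ring R] [IsAddTorsionFree R] {e : ι → ℕ} [Northcott e]
    {c : ι → R} (σ : Equiv.Perm ι) (he : ∀ i, e (σ i) = e i) (hc : ∀ i, c (σ i) = -c i) :
    fiberSeries e c = 0 := by
  ext n
  rw [map_zero, ← self_eq_neg]
  calc coeff n (fiberSeries e c) = coeff n (fiberSeries (e ∘ σ) (c ∘ σ)) := by
        rw [fiberSeries_comp_equiv]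
    _ = ∑ᶠ i ∈ e ⁻¹' {n}, -c i := by
        rw [coeff_fiberSeries, show e ∘ σ = e from funext he, show c ∘ σ = -c from funext hc]
        rfl
    _ = -coeff n (fiberSeries e c) := by
        rw [coeff_fiberSeries,
          finsum_mem_neg_distrib _ (finite_preimage_singleton_of_northcott e n)]

end FiberSeries

section ColouredPartitions

theorem sum_map_toMultiset_eq_weight {σ : Type*} (w : σ → ℕ) (f : σ →₀ ℕ) :
    (f.toMultiset.map w).sum = Finsupp.weight w f := by
  rw [Finsupp.toMultiset_map, Finsupp.sum_toMultiset, Finsupp.weight_apply,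
    Finsupp.sum_mapDomain_index (by simp) (by simp [add_mul])]

/-- The partition whose part `m` has multiplicity `f m`. -/
noncomputable def partitionOfMultiplicity {n : ℕ}
    (f : Finsupp.weight (R := ℕ) PNat.val ⁻¹' {n}) : n.Partition where
  parts := (Finsupp.toMultiset f.1).map PNat.val
  parts_pos := by simp +contextual
  parts_sum := (sum_map_toMultiset_eq_weight PNat.val f.1).trans f.2

theorem partitionOfMultiplicity_bijective (n : ℕ) :
    (partitionOfMultiplicity (n := n)).Bijective := by
  refine ⟨fun f g hfg ↦ ?_, fun p ↦ ?_⟩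
  · have hparts : (Finsupp.toMultiset f.1).map PNat.val = (Finsupp.toMultiset g.1).map PNat.val :=
      congrArg Nat.Partition.parts hfg
    exact Subtype.ext (Multiset.toFinsupp.symm.injective
      (Multiset.map_injective PNat.coe_injective hparts))
  · obtain ⟨s, hs⟩ : ∃ s : Multiset ℕ+, s.map PNat.val = p.parts :=
      CanLift.prf p.parts fun _ ↦ p.parts_pos
    have hweight : Finsupp.weight PNat.val (Multiset.toFinsupp s) = n := by
      rw [← sum_map_toMultiset_eq_weight, Multiset.toFinsupp_toMultiset, hs, p.parts_sum]
    refine ⟨⟨Multiset.toFinsupp s, hweight⟩, ?_⟩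
    ext1
    simpa only [partitionOfMultiplicity, Multiset.toFinsupp_toMultiset] using hs

instance northcott_weight_pnat : Northcott (Finsupp.weight (R := ℕ) PNat.val) where
  finite_le n := (Set.finite_Iic n).preimage' fun m _ ↦
    Finite.of_injective _ (partitionOfMultiplicity_bijective m).injective

theorem fiberSeries_weight_pnat (R : Type*) [Semiring R] :
    fiberSeries (Finsupp.weight (R := ℕ) PNat.val) (fun _ ↦ (1 : R)) =
      mk fun n ↦ (Fintype.card n.Partition : R) := by
  rw [fiberSeries_one]
  ext n
  rw [coeff_mk, coeff_mk, ← Nat.card_coe_set_eq,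
    Nat.card_eq_of_bijective _ (partitionOfMultiplicity_bijective n), Nat.card_eq_fintype_card]

/-- Splits the multiplicity function of a multiset of `r`-coloured elements of `σ` into those of its
colour classes. -/
noncomputable def finsuppProdFinEquiv (σ : Type*) (r : ℕ) :
    (σ × Fin r →₀ ℕ) ≃ (Fin r → σ →₀ ℕ) :=
  (Finsupp.domCongr (Equiv.prodComm _ _)).toEquiv.trans
    (Finsupp.curryEquiv.trans Finsupp.equivFunOnFinite)

theorem sum_weight_finsuppProdFinEquiv {σ : Type*} (w : σ → ℕ) {r : ℕ} (f : σ × Fin r →₀ ℕ) :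
    ∑ j, Finsupp.weight w (finsuppProdFinEquiv σ r f j) = f.sum fun x m ↦ w x.1 * m := by
  have hcurry := Finsupp.sum_curry_index (Finsupp.equivMapDomain (Equiv.prodComm _ _) f)
    fun _ x m ↦ w x * m
  rw [Finsupp.sum_equivMapDomain, Finsupp.sum_fintype _ _ (by simp)] at hcurry
  simp_rw [Finsupp.weight_apply, smul_eq_mul, mul_comm _ (w _)]
  exact hcurry

theorem mk_colouredPartitions (R : Type*) [CommSemiring R] (r : ℕ) :
    (mk fun n ↦ (colouredPartitions r n : R)) =
      (mk fun n ↦ (Fintype.card n.Partition : R)) ^ r := by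
  rw [← fiberSeries_weight_pnat, fiberSeries_pow]
  simp only [Finset.prod_const_one]
  rw [fiberSeries_one]
  ext n
  rw [coeff_mk, coeff_mk, ← Nat.card_coe_set_eq, colouredPartitions]
  congr 1
  exact Nat.card_congr ((finsuppProdFinEquiv ℕ+ r).subtypeEquiv fun f ↦ by
    rw [← sum_weight_finsuppProdFinEquiv PNat.val]; rfl)

open scoped PowerSeries.WithPiTopology in
theorem mk_card_partition_mul_pentagonalSeries (R : Type*) [CommRing R] :
    (mk fun n ↦ (Fintype.card n.Partition : R)) * pentagonalSeries R = 1 := by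
  let _ : TopologicalSpace R := ⊥
  have _ : DiscreteTopology R := ⟨rfl⟩
  have hgeom (i : ℕ) : (∑' j : ℕ, (X : R⟦X⟧) ^ ((i + 1) * j)) * (1 - X ^ (i + 1)) = 1 := by
    simp only [pow_mul]
    exact WithPiTopology.tsum_pow_mul_one_sub_of_constantCoeff_eq_zero (by simp)
  have hprod := (Nat.Partition.hasProd_powerSeriesMk_card_restricted R fun _ ↦ True).mul
    (WithPiTopology.hasProd_one_sub_X_pow R)
  simp only [if_true, hgeom] at hprod
  simpa [Nat.Partition.restricted] using hprod.unique hasProd_one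

theorem mk_colouredPartitions_mul_pentagonalSeries_pow (R : Type*) [CommRing R] (r : ℕ) :
    (mk fun n ↦ (colouredPartitions r n : R)) * pentagonalSeries R ^ r = 1 := by
  rw [mk_colouredPartitions, ← mul_pow, mk_card_partition_mul_pentagonalSeries, one_pow]

end ColouredPartitions

section Jacobi

/-- The triangular numbers `j * (j + 1) / 2`, indexed by `ℤ`: `j = 2 * m` if `0 ≤ m`, and
`j = -2 * m - 1` if `m < 0`. -/
def bilateralTriangular (m : ℤ) : ℕ := (m * (2 * m + 1)).toNat

theorem natCast_bilateralTriangular (m : ℤ) :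
    (bilateralTriangular m : ℤ) = m * (2 * m + 1) := by
  refine Int.toNat_of_nonneg ?_
  rcases le_or_gt 0 m with hm | hm <;> nlinarith

theorem bilateralTriangular_injective : bilateralTriangular.Injective := by
  intro m m' h
  have hprod : (m - m') * (2 * (m + m') + 1) = 0 := by
    have hcast := congrArg ((↑) : ℕ → ℤ) h
    rw [natCast_bilateralTriangular, natCast_bilateralTriangular] at hcast
    linear_combination hcast
  rcases mul_eq_zero.1 hprod with h | h <;> omega

instance northcott_bilateralTriangular : Northcott bilateralTriangular :=
  northcott_of_injective bilateralTriangular_injective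

instance northcott_pentagonal : Northcott pentagonal :=
  northcott_of_injective pentagonal_injective

theorem pentagonalSeries_eq_fiberSeries (R : Type*) [CommRing R] :
    pentagonalSeries R = fiberSeries pentagonal fun k ↦ ((k.negOnePow : ℤ) : R) := by
  ext n
  by_cases hn : n ∈ Set.range pentagonal
  · obtain ⟨k, rfl⟩ := hn
    rw [coeff_pentagonalSeries_pentagonal, coeff_fiberSeries_of_injective pentagonal_injective]
  · rw [coeff_pentagonalSeries_eq_zero R hn, coeff_fiberSeries_of_notMem_range hn]

theorem map_pentagonalSeries {R S : Type*} [CommRing R] [CommRing S] (φ : R →+* S) :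
    (pentagonalSeries R).map φ = pentagonalSeries S := by
  simp only [pentagonalSeries_eq_fiberSeries, map_fiberSeries, Function.comp_def, map_intCast]

/-- Jacobi's series `∑ j ≥ 0, (-1) ^ j * (2 * j + 1) * X ^ (j * (j + 1) / 2)`, indexed by `ℤ`
through `4 * m + 1 = (-1) ^ j * (2 * j + 1)`. -/
noncomputable def jacobiSeries (R : Type*) [CommRing R] : R⟦X⟧ :=
  fiberSeries bilateralTriangular fun m ↦ ((4 * m + 1 : ℤ) : R)

theorem map_jacobiSeries {R S : Type*} [CommRing R] [CommRing S] (φ : R →+* S) :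
    (jacobiSeries R).map φ = jacobiSeries S := by
  simp only [jacobiSeries, map_fiberSeries, Function.comp_def, map_intCast]

theorem constantCoeff_pentagonalSeries (R : Type*) [CommRing R] :
    constantCoeff (pentagonalSeries R) = 1 := by
  simpa [pentagonal_def] using coeff_pentagonalSeries_pentagonal R 0

theorem constantCoeff_jacobiSeries (R : Type*) [CommRing R] :
    constantCoeff (jacobiSeries R) = 1 := by
  simpa [jacobiSeries, bilateralTriangular] using
    coeff_fiberSeries_of_injective bilateralTriangular_injective (fun m ↦ ((4 * m + 1 : ℤ) : R)) 0

/-- In the coordinates `a = 6 * k - 1`, `b = 4 * m + 1`, the pair `x = (k, m)` stands for the number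
`a + b * √-3`. `sixthTurn` multiplies it by the one of `(1 ± √-3) / 2` for which the result has odd
coordinates again, then adjusts the signs of these so that they are `≡ -1` modulo 6 and `≡ 1`
modulo 4. Below, `a` and `b` are the coordinates of the result, `b` still up to sign. -/
def sixthTurn : ℤ × ℤ → ℤ × ℤ
  | (k, m) =>
    let a := if Even k then -(3 * k + 6 * m + 1) else 6 * m + 2 - 3 * k
    let b := if Even k then 3 * k - 2 * m - 1 else 3 * k + 2 * m
    ((a + 1) / 6, if b % 4 = 1 then (b - 1) / 4 else (-b - 1) / 4)

theorem sixthTurn_involutive : sixthTurn.Involutive := by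
  rintro ⟨k, m⟩
  simp only [sixthTurn, Prod.mk.injEq, Int.even_iff]
  grind

theorem sixthTurn_cases (x : ℤ × ℤ) : ∃ i t : ℤ,
    (x = (2 * i, 2 * t - i) ∧ sixthTurn x = (2 * -t, t - 2 * i)) ∨
    (x = (2 * i, 2 * t + 1 - i) ∧ sixthTurn x = (2 * (-t - 1) + 1, 2 * i - t - 1)) ∨
    (x = (2 * i + 1, i + 2 * t) ∧ sixthTurn x = (2 * t, -(2 * i + t + 1))) ∨
    (x = (2 * i + 1, i + 2 * t + 1) ∧ sixthTurn x = (2 * t + 1, 2 * i + t + 1)) := by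
  obtain ⟨k, m⟩ := x
  simp only [sixthTurn, Prod.mk.injEq, Int.even_iff]
  rcases Int.emod_two_eq_zero_or_one k with hk | hk
  · refine ⟨k / 2, (m + k / 2) / 2, ?_⟩
    grind
  · refine ⟨k / 2, (m - k / 2) / 2, ?_⟩
    grind

theorem pentagonal_add_bilateralTriangular_sixthTurn (x : ℤ × ℤ) :
    pentagonal (sixthTurn x).1 + bilateralTriangular (sixthTurn x).2 =
      pentagonal x.1 + bilateralTriangular x.2 := by
  zify
  rw [← mul_right_inj' (two_ne_zero (α := ℤ)), mul_add, mul_add]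
  simp only [two_mul_natCast_pentagonal, natCast_bilateralTriangular]
  obtain ⟨i, t, ⟨rfl, h⟩ | ⟨rfl, h⟩ | ⟨rfl, h⟩ | ⟨rfl, h⟩⟩ := sixthTurn_cases x <;> rw [h] <;> ring

/-- The coefficients of `X * (E * J' - 3 * J * E')`, with `E` the pentagonal and `J` the Jacobi
series, as a double sum. In the coordinates of `sixthTurn` they are
`(-1) ^ k * b * (b ^ 2 - a ^ 2) / 8`, up to sign a multiple of the imaginary part of
`(a + b * √-3) ^ 3`, which a sixth of a turn negates. -/
def wronskianTerm (x : ℤ × ℤ) : ℤ :=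
  x.1.negOnePow * (4 * x.2 + 1) * (bilateralTriangular x.2 - 3 * pentagonal x.1)

theorem wronskianTerm_sixthTurn (x : ℤ × ℤ) :
    wronskianTerm (sixthTurn x) = -wronskianTerm x := by
  have sign_even (i : ℤ) : ((2 * i).negOnePow : ℤ) = 1 := by
    rw [Int.negOnePow_even _ (even_two_mul i), Units.val_one]
  have sign_odd (i : ℤ) : ((2 * i + 1).negOnePow : ℤ) = -1 := by
    rw [Int.negOnePow_odd _ (odd_two_mul_add_one i), Units.val_neg, Units.val_one]
  have two_mul_term (y : ℤ × ℤ) : 2 * wronskianTerm y = y.1.negOnePow * (4 * y.2 + 1) *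
      (2 * (y.2 * (2 * y.2 + 1)) - 3 * (y.1 * (3 * y.1 - 1))) := by
    rw [wronskianTerm, ← natCast_bilateralTriangular, ← two_mul_natCast_pentagonal]
    ring
  rw [← mul_right_inj' (two_ne_zero (α := ℤ)), mul_neg, two_mul_term, two_mul_term]
  obtain ⟨i, t, ⟨rfl, h⟩ | ⟨rfl, h⟩ | ⟨rfl, h⟩ | ⟨rfl, h⟩⟩ := sixthTurn_cases x <;>
    simp only [h, sign_even, sign_odd] <;> ring

theorem pentagonalSeries_mul_derivative_jacobiSeries :
    pentagonalSeries ℤ * d⁄dX ℤ (jacobiSeries ℤ) =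
      3 * jacobiSeries ℤ * d⁄dX ℤ (pentagonalSeries ℤ) := by
  have hzero : fiberSeries (fun x : ℤ × ℤ ↦ pentagonal x.1 + bilateralTriangular x.2)
      wronskianTerm = 0 :=
    fiberSeries_eq_zero_of_perm_neg sixthTurn_involutive.toPerm
      pentagonal_add_bilateralTriangular_sixthTurn wronskianTerm_sixthTurn
  rw [← X_mul_inj, ← sub_eq_zero, ← hzero]
  calc X * (pentagonalSeries ℤ * d⁄dX ℤ (jacobiSeries ℤ)) -
        X * (3 * jacobiSeries ℤ * d⁄dX ℤ (pentagonalSeries ℤ))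
      = pentagonalSeries ℤ * (X * d⁄dX ℤ (jacobiSeries ℤ)) -
        C 3 * (X * d⁄dX ℤ (pentagonalSeries ℤ)) * jacobiSeries ℤ := by
        rw [map_ofNat]; ring
    _ = fiberSeries (fun x ↦ pentagonal x.1 + bilateralTriangular x.2) wronskianTerm := by
        rw [jacobiSeries, pentagonalSeries_eq_fiberSeries, X_mul_derivative_fiberSeries,
          X_mul_derivative_fiberSeries, C_mul_fiberSeries, fiberSeries_mul_fiberSeries,
          fiberSeries_mul_fiberSeries, ← fiberSeries_sub]
        congr 1 with x
        simp only [wronskianTerm, Int.cast_id]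
        ring

theorem eq_of_mul_derivative_eq {R : Type*} [CommRing R] [IsAddTorsionFree R] {f g : R⟦X⟧}
    (hD : d⁄dX R f * g = f * d⁄dX R g) (hc : constantCoeff f = constantCoeff g)
    (hg : IsUnit (constantCoeff g)) : f = g := by
  obtain ⟨u, rfl⟩ := isUnit_iff_constantCoeff.2 hg
  suffices hquot : f * (u⁻¹ : R⟦X⟧ˣ) = 1 from Units.mul_inv_eq_one.1 hquot
  apply derivative.ext
  · rw [Derivation.leibniz, derivative_one, derivative_inv, smul_eq_mul, smul_eq_mul]
    linear_combination (u⁻¹ : R⟦X⟧ˣ) ^ 2 * hD - (u⁻¹ : R⟦X⟧ˣ) * d⁄dX R f * u.inv_mul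
  · rw [map_mul, hc, ← map_mul, Units.mul_inv]

theorem pentagonalSeries_int_pow_three : pentagonalSeries ℤ ^ 3 = jacobiSeries ℤ := by
  symm
  refine eq_of_mul_derivative_eq ?_ ?_ ?_
  · rw [derivative_pow, Nat.cast_ofNat]
    linear_combination pentagonalSeries ℤ ^ 2 * pentagonalSeries_mul_derivative_jacobiSeries
  · simp [constantCoeff_jacobiSeries, constantCoeff_pentagonalSeries]
  · simp [constantCoeff_pentagonalSeries]

theorem pentagonalSeries_pow_three (R : Type*) [CommRing R] :
    pentagonalSeries R ^ 3 = jacobiSeries R := by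
  rw [← map_pentagonalSeries (Int.castRingHom R), ← map_pow, pentagonalSeries_int_pow_three,
    map_jacobiSeries]

end Jacobi

section CharP

variable {R : Type*} [CommRing R] (p : ℕ) [Fact p.Prime] [CharP R p]

theorem coeff_pow_char_eq_zero (f : R⟦X⟧) {n : ℕ} (hn : ¬p ∣ n) :
    coeff n (f ^ p) = 0 := by
  have hp : p ≠ 0 := (Fact.out : p.Prime).ne_zero
  have hfrob : (PowerSeries.expand p hp f).map (frobenius R p) = f ^ p :=
    MvPowerSeries.map_frobenius_expand p hp
  rw [← hfrob, coeff_map, coeff_expand_of_not_dvd p hp f hn, map_zero]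

theorem coeff_mul_pow_char_eq_zero {a : ℕ} {f : R⟦X⟧}
    (hf : ∀ n, n ≡ a [MOD p] → coeff n f = 0) (g : R⟦X⟧) {n : ℕ} (hn : n ≡ a [MOD p]) :
    coeff n (f * g ^ p) = 0 := by
  rw [coeff_mul]
  refine Finset.sum_eq_zero fun x hx ↦ ?_
  rw [Finset.HasAntidiagonal.mem_antidiagonal] at hx
  by_cases hdvd : p ∣ x.2
  · have hx₁ : x.1 ≡ n [MOD p] := by
      simpa [hx] using (Nat.modEq_zero_iff_dvd.2 hdvd).symm.add_left x.1
    rw [hf _ (hx₁.trans hn), zero_mul]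
  · rw [coeff_pow_char_eq_zero p g hdvd, mul_zero]

end CharP

theorem four_mul_add_one_eq_zero_of_modEq {k m : ℤ} {n : ℕ} (hn : n ≡ 4 [MOD 5])
    (h : pentagonal k + bilateralTriangular m = n) : ((4 * m + 1 : ℤ) : ZMod 5) = 0 := by
  have hint : k * (3 * k - 1) + 2 * (m * (2 * m + 1)) = 2 * n := by
    rw [← two_mul_natCast_pentagonal, ← natCast_bilateralTriangular, ← h]
    push_cast
    ring
  have hmod : (k : ZMod 5) * (3 * k - 1) + 2 * (m * (2 * m + 1)) = 2 * 4 := by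
    have hn' : (n : ZMod 5) = (4 : ℕ) := (ZMod.natCast_eq_natCast_iff _ _ _).2 hn
    simpa [hn'] using congrArg (Int.cast : ℤ → ZMod 5) hint
  have hresidue : ∀ x y : ZMod 5,
      x * (3 * x - 1) + 2 * (y * (2 * y + 1)) = 2 * 4 → 4 * y + 1 = 0 := by decide
  simpa using hresidue k m hmod

theorem coeff_pentagonalSeries_pow_four_eq_zero {n : ℕ} (hn : n ≡ 4 [MOD 5]) :
    coeff n (pentagonalSeries (ZMod 5) ^ 4) = 0 := by
  rw [pow_succ', pentagonalSeries_pow_three, pentagonalSeries_eq_fiberSeries, jacobiSeries,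
    fiberSeries_mul_fiberSeries, coeff_fiberSeries]
  refine finsum_mem_of_eqOn_zero fun x hx ↦ ?_
  simp only [four_mul_add_one_eq_zero_of_modEq hn hx, mul_zero, Pi.zero_apply]

theorem colouredPartitions_cong_mod5_1 (k n : ℕ) :
    5 ∣ colouredPartitions (5 * k + 1) (5 * n + 4) := by
  have : Fact (Nat.Prime 5) := ⟨by norm_num⟩
  let F (r : ℕ) : (ZMod 5)⟦X⟧ := mk fun n ↦ (colouredPartitions r n : ZMod 5)
  have hF (r : ℕ) : F r * pentagonalSeries (ZMod 5) ^ r = 1 :=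
    mk_colouredPartitions_mul_pentagonalSeries_pow (ZMod 5) r
  have hfactor : F (5 * k + 1) = pentagonalSeries (ZMod 5) ^ 4 * F (k + 1) ^ 5 := by
    calc F (5 * k + 1)
        = F (5 * k + 1) * (F (k + 1) * pentagonalSeries (ZMod 5) ^ (k + 1)) ^ 5 := by
          rw [hF, one_pow, mul_one]
      _ = (F (5 * k + 1) * pentagonalSeries (ZMod 5) ^ (5 * k + 1)) *
          (pentagonalSeries (ZMod 5) ^ 4 * F (k + 1) ^ 5) := by ring
      _ = pentagonalSeries (ZMod 5) ^ 4 * F (k + 1) ^ 5 := by rw [hF, one_mul]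
  have hzero : coeff (5 * n + 4) (F (5 * k + 1)) = 0 := by
    rw [hfactor]
    exact coeff_mul_pow_char_eq_zero 5 (fun _ ↦ coeff_pentagonalSeries_pow_four_eq_zero) _
      (by simp [Nat.ModEq])
  rwa [coeff_mk, ZMod.natCast_eq_zero_iff] at hzero
end

section
/- For every non-negative integer k, every non-negative integer n, and every i ∈ {2, 3, 4}, the number of (5k+2)-colour partitions of 5n+i is divisible by 5; that is, p_{5k+2}(5n+i) ≡ 0 (mod 5). -/
/-!
Write `E = ∏ (1 - q ^ (n + 1))`, so that the generating function of `colouredPartitions r` is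
`E ^ (-r)`. If a prime `p` divides `r + 3`, say `r + 3 = p * m`, then modulo `p`
`E ^ (-r) = E ^ 3 * E ^ (-p * m) = E(q) ^ 3 * E(q ^ p) ^ (-m)`, so the coefficient of `q ^ n` only
involves coefficients of `E ^ 3` at exponents congruent to `n` modulo `p`. By Jacobi's identity
`E ^ 3 = ∑ (-1) ^ j * (2 * j + 1) * q ^ (j * (j + 1) / 2)`. An exponent `d` occurring here satisfies
`8 * d + 1 = (2 * j + 1) ^ 2`, so its coefficient survives modulo `p` only if `8 * d + 1` is a
nonzero square modulo `p`. For `p = 5` this excludes `d ≡ 2, 3, 4`.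

Jacobi's identity is the limit `n → ∞` of the finite form
`∑ (-1) ^ j * (2 * j + 1) * q ^ (j * (j + 1) / 2) * [2 * n + 1, n + 1 + j] = (q; q)_n ^ 2` with
Gaussian binomial coefficients `[a, b]`, which follows by induction on `n` from the two Pascal
rules.
-/

open Finset PowerSeries
open scoped PowerSeries.WithPiTopology

section GaussianBinomial

variable {R : Type*} [CommRing R] (q : R)

/-- The `q`-Pochhammer symbol `(q; q)_n = (1 - q) (1 - q ^ 2) ⋯ (1 - q ^ n)`. -/
def qPochhammer (n : ℕ) : R := ∏ i ∈ range n, (1 - q ^ (i + 1))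

theorem qPochhammer_succ (n : ℕ) :
    qPochhammer q (n + 1) = qPochhammer q n * (1 - q ^ (n + 1)) :=
  prod_range_succ _ _

/-- The Gaussian binomial coefficient, defined by a `q`-analogue of Pascal's rule so that it makes
sense for every element `q` of a commutative ring. -/
def qChoose : ℕ → ℕ → R
  | _, 0 => 1
  | 0, _ + 1 => 0
  | n + 1, k + 1 => qChoose n k + q ^ (k + 1) * qChoose n (k + 1)

@[simp]
theorem qChoose_zero_right (n : ℕ) : qChoose q n 0 = 1 := by cases n <;> rfl

theorem qChoose_succ_succ (n k : ℕ) :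
    qChoose q (n + 1) (k + 1) = qChoose q n k + q ^ (k + 1) * qChoose q n (k + 1) := rfl

theorem qChoose_eq_zero_of_lt {n k : ℕ} (h : n < k) : qChoose q n k = 0 := by
  induction n generalizing k with
  | zero => obtain ⟨k, rfl⟩ := Nat.exists_eq_add_of_lt h; rfl
  | succ n ih =>
    obtain ⟨k, rfl⟩ := Nat.exists_eq_succ_of_ne_zero (Nat.ne_zero_of_lt h)
    rw [qChoose_succ_succ, ih (by omega), ih (by omega), mul_zero, add_zero]

@[simp]
theorem qChoose_self (n : ℕ) : qChoose q n n = 1 := by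
  induction n with
  | zero => rfl
  | succ n ih => rw [qChoose_succ_succ, ih, qChoose_eq_zero_of_lt q n.lt_succ_self, mul_zero,
      add_zero]

theorem qChoose_succ_succ' (n k : ℕ) :
    qChoose q (n + 1) (k + 1) = q ^ (n - k) * qChoose q n k + qChoose q n (k + 1) := by
  induction n generalizing k with
  | zero => cases k <;> simp [qChoose]
  | succ n ih =>
    rcases lt_or_ge n k with hk | hk
    · rw [qChoose_succ_succ, qChoose_eq_zero_of_lt q (by omega : n + 1 < k + 1),
        Nat.sub_eq_zero_of_le hk]
      ring
    have rule_k := qChoose_succ_succ q n k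
    have ih_k := ih k
    rw [qChoose_succ_succ q (n + 1) k]
    rcases k with _ | k
    · simp only [qChoose_zero_right, Nat.sub_zero] at *
      linear_combination q * ih_k - rule_k
    · have rule_pred := qChoose_succ_succ q n k
      have ih_pred := ih k
      obtain ⟨b, rfl⟩ := Nat.exists_eq_add_of_le hk
      rw [show k + 1 + b - k = b + 1 by omega] at ih_pred
      rw [Nat.add_sub_cancel_left] at ih_k
      rw [show k + 1 + b + 1 - (k + 1) = b + 1 by omega]
      linear_combination ih_pred - q ^ (b + 1) * rule_pred + q ^ (k + 2) * ih_k - rule_k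

theorem qChoose_add_symm (a b : ℕ) : qChoose q (a + b) a = qChoose q (a + b) b := by
  induction hN : a + b generalizing a b with
  | zero => rw [show a = b by omega]
  | succ N ih =>
    rcases a with _ | a
    · simp [show b = N + 1 by omega]
    rcases b with _ | b
    · simp [show a = N by omega]
    rw [qChoose_succ_succ, qChoose_succ_succ', ih a (b + 1) (by omega), ih (a + 1) b (by omega),
      show N - b = a + 1 by omega, add_comm]

theorem qChoose_mul_qPochhammer_mul_qPochhammer (a b : ℕ) :
    qChoose q (a + b) a * qPochhammer q a * qPochhammer q b = qPochhammer q (a + b) := by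
  induction hN : a + b generalizing a b with
  | zero => simp [show a = 0 by omega, show b = 0 by omega, qPochhammer]
  | succ N ih =>
    rcases a with _ | a
    · simp [show b = N + 1 by omega, qPochhammer]
    rcases b with _ | b
    · simp [show a = N by omega, qPochhammer]
    obtain rfl : N = a + b + 1 := by omega
    have left := ih a (b + 1) (by omega)
    have right := ih (a + 1) b (by omega)
    rw [qPochhammer_succ] at left right
    rw [qChoose_succ_succ, qPochhammer_succ q a, qPochhammer_succ q b,
      qPochhammer_succ q (a + b + 1)]
    linear_combination (1 - q ^ (a + 1)) * left + q ^ (a + 1) * (1 - q ^ (b + 1)) * right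

theorem qChoose_add_two (a b : ℕ) :
    qChoose q (a + b + 2) (a + 2) = q ^ b * qChoose q (a + b) a
      + (1 + q ^ (a + b + 1)) * qChoose q (a + b) (a + 1)
      + q ^ (a + 2) * qChoose q (a + b) (a + 2) := by
  rw [qChoose_succ_succ, qChoose_succ_succ', Nat.add_sub_cancel_left]
  rcases b with _ | b
  · simp [qChoose_eq_zero_of_lt]
  · rw [qChoose_succ_succ' q _ (a + 1), show a + (b + 1) - (a + 1) = b by omega]
    ring

end GaussianBinomial

section FiniteJacobi

variable {R : Type*} [CommRing R] (q : R)

theorem succ_choose_two (j : ℕ) : (j + 1).choose 2 = j.choose 2 + j := by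
  rw [Nat.choose_succ_succ' j 1, Nat.choose_one_right, add_comm]

theorem eight_mul_succ_choose_two_add_one (j : ℕ) : 8 * (j + 1).choose 2 + 1 = (2 * j + 1) ^ 2 := by
  induction j with
  | zero => rfl
  | succ j ih => rw [succ_choose_two]; linear_combination ih

/-- The `j`-th term `(-1) ^ j (2 j + 1) q ^ (j (j + 1) / 2)` of Jacobi's series for the cube of the
Euler function. -/
def jacobiTerm (j : ℕ) : R := (-1) ^ j * (2 * j + 1) * q ^ (j + 1).choose 2

-- By `qChoose_add_two` the summand is `-q ^ (n + 1) * (2 * j + 1)` times the second difference in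
-- `j` of `(-1) ^ j * q ^ (j * (j + 1) / 2) * [2 * n + 1, n + 1 + j]`, so the sum telescopes.
theorem sum_jacobiTerm_mul_qChoose_sub (n m : ℕ) (hm : m ≤ n + 1) :
    ∑ j ∈ range (m + 1), jacobiTerm q j * (qChoose q (2 * n + 3) (n + 2 + j)
        - (1 - q ^ (n + 1)) ^ 2 * qChoose q (2 * n + 1) (n + 1 + j)) =
      (-1) ^ m * q ^ (n + 1) * q ^ (m + 1).choose 2 *
        ((2 * m + 3) * qChoose q (2 * n + 1) (n + 1 + m)
          + (2 * m + 1) * q ^ (m + 1) * qChoose q (2 * n + 1) (n + 2 + m)) := by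
  induction m with
  | zero =>
    have three_term := qChoose_add_two q n (n + 1)
    rw [qChoose_add_symm q n (n + 1), show n + (n + 1) = 2 * n + 1 by omega] at three_term
    simp only [zero_add, range_one, jacobiTerm, sum_singleton, pow_zero, Nat.cast_zero, mul_zero,
      mul_one, Nat.choose_succ_self, add_zero, three_term, one_mul, pow_one]
    ring
  | succ m ih =>
    have three_term := qChoose_add_two q (n + (m + 1)) (n - m)
    rw [show n + (m + 1) + (n - m) = 2 * n + 1 by omega] at three_term
    have pow_split : q ^ (m + 1) * q ^ (n - m) = q ^ (n + 1) := by
      rw [← pow_add]; congr 1; omega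
    rw [sum_range_succ, ih (by omega), jacobiTerm, succ_choose_two (m + 1),
      show n + 2 + (m + 1) = n + (m + 1) + 2 by ring, three_term,
      show n + 1 + (m + 1) = n + (m + 1) + 1 by ring, show n + 1 + m = n + (m + 1) by ring,
      show n + 2 + m = n + (m + 1) + 1 by ring]
    push_cast
    linear_combination (-1) ^ (m + 1) * (2 * m + 3) * q ^ (m + 1).choose 2
      * qChoose q (2 * n + 1) (n + (m + 1)) * pow_split

theorem sum_jacobiTerm_mul_qChoose (n : ℕ) :
    ∑ j ∈ range (n + 1), jacobiTerm q j * qChoose q (2 * n + 1) (n + 1 + j) =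
      qPochhammer q n ^ 2 := by
  induction n with
  | zero => simp [jacobiTerm, qPochhammer]
  | succ n ih =>
    have telescoped := sum_jacobiTerm_mul_qChoose_sub q n (n + 1) le_rfl
    rw [qChoose_eq_zero_of_lt q (by omega : 2 * n + 1 < n + 1 + (n + 1)),
      qChoose_eq_zero_of_lt q (by omega : 2 * n + 1 < n + 2 + (n + 1))] at telescoped
    simp only [mul_sub, sum_sub_distrib, mul_left_comm _ ((1 - q ^ (n + 1)) ^ 2), ← mul_sum]
      at telescoped
    rw [sum_range_succ (fun j ↦ jacobiTerm q j * qChoose q (2 * n + 1) (n + 1 + j)), ih,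
      qChoose_eq_zero_of_lt q (by omega : 2 * n + 1 < n + 1 + (n + 1))] at telescoped
    rw [qPochhammer_succ, show 2 * (n + 1) + 1 = 2 * n + 3 by ring]
    linear_combination telescoped

end FiniteJacobi

section EulerFunction

variable (R : Type*) [CommRing R]

theorem X_pow_dvd_qPochhammer_sub {m n : ℕ} (h : m ≤ n) :
    (X : R⟦X⟧) ^ (m + 1) ∣ qPochhammer X n - qPochhammer X m := by
  induction n, h using Nat.le_induction with
  | base => simp
  | succ n h ih =>
    rw [qPochhammer_succ, mul_one_sub, sub_right_comm]
    exact dvd_sub ih ((pow_dvd_pow X (by omega)).mul_left _)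

theorem coeff_jacobiTerm_X (d j : ℕ) :
    coeff d (jacobiTerm (X : R⟦X⟧) j) =
      if d = (j + 1).choose 2 then (-1) ^ j * (2 * j + 1 : R) else 0 := by
  have scalar : (-1) ^ j * (2 * j + 1) = C ((-1) ^ j * (2 * j + 1) : R) := by
    simp only [map_mul, map_pow, map_neg, map_one, map_add, map_ofNat, map_natCast]
  rw [jacobiTerm, scalar, coeff_C_mul_X_pow]

variable [TopologicalSpace R]

/-- The Euler function `∏ (1 - X ^ n)`, over `n ≥ 1`, as a formal power series. -/
noncomputable def eulerFunction : R⟦X⟧ := ∏' n, (1 - X ^ (n + 1))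

variable [T2Space R]

theorem X_pow_dvd_eulerFunction_sub {m n : ℕ} (h : m ≤ n) :
    (X : R⟦X⟧) ^ (m + 1) ∣ eulerFunction R - qPochhammer X n := by
  refine X_pow_dvd_iff.2 fun d hd ↦ ?_
  rw [map_sub, sub_eq_zero]
  have tendsto_coeff := (WithPiTopology.tendsto_iff_coeff_tendsto R _ _ _).1
    (WithPiTopology.multipliable_one_sub_X_pow R).tendsto_prod_tprod_nat d
  refine tendsto_nhds_unique tendsto_coeff (tendsto_const_nhds.congr' ?_)
  filter_upwards [Filter.eventually_ge_atTop n] with N hN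
  have stable := X_pow_dvd_iff.1 (X_pow_dvd_qPochhammer_sub R hN) d (by omega)
  exact (sub_eq_zero.1 ((map_sub _ _ _).symm.trans stable)).symm

theorem isUnit_eulerFunction : IsUnit (eulerFunction R) := by
  have h := X_dvd_iff.1 ((pow_one X).symm.dvd.trans (X_pow_dvd_eulerFunction_sub R (le_refl 0)))
  rw [isUnit_iff_constantCoeff, sub_eq_zero.1 ((map_sub _ _ _).symm.trans h)]
  simp [qPochhammer]

theorem X_pow_dvd_qChoose_mul_eulerFunction_sub_one {m a b : ℕ} (ha : m ≤ a) (hb : m ≤ b) :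
    (X : R⟦X⟧) ^ (m + 1) ∣ qChoose X (a + b) a * eulerFunction R - 1 := by
  rw [← (isUnit_eulerFunction R).dvd_mul_right]
  have at_a := X_pow_dvd_eulerFunction_sub R ha
  have at_b := X_pow_dvd_eulerFunction_sub R hb
  have at_sum := X_pow_dvd_eulerFunction_sub R (ha.trans (Nat.le_add_right a b))
  convert ((at_a.mul_left (qChoose X (a + b) a * eulerFunction R)).add
    (at_b.mul_left (qChoose X (a + b) a * qPochhammer X a))).sub at_sum using 1
  linear_combination qChoose_mul_qPochhammer_mul_qPochhammer (X : R⟦X⟧) a b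

theorem X_pow_dvd_eulerFunction_pow_three_sub (n : ℕ) :
    (X : R⟦X⟧) ^ (n + 1) ∣ eulerFunction R ^ 3 - ∑ j ∈ range (n + 1), jacobiTerm X j := by
  have to_finite : (X : R⟦X⟧) ^ (n + 1) ∣
      eulerFunction R ^ 3 - qPochhammer X n ^ 2 * eulerFunction R := by
    rw [pow_succ _ 2, ← sub_mul]
    exact ((X_pow_dvd_eulerFunction_sub R le_rfl).trans (sub_dvd_pow_sub_pow _ _ 2)).mul_right _
  have finite_jacobi : (X : R⟦X⟧) ^ (n + 1) ∣
      qPochhammer X n ^ 2 * eulerFunction R - ∑ j ∈ range (n + 1), jacobiTerm X j := by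
    rw [← sum_jacobiTerm_mul_qChoose, sum_mul, ← sum_sub_distrib]
    refine dvd_sum fun j hj ↦ ?_
    have hjn : j ≤ n := Nat.lt_succ_iff.1 (mem_range.1 hj)
    have le_choose : j ≤ (j + 1).choose 2 := by rw [succ_choose_two]; omega
    have tail := X_pow_dvd_qChoose_mul_eulerFunction_sub_one R
      (by omega : n - j ≤ n + 1 + j) le_rfl
    rw [show n + 1 + j + (n - j) = 2 * n + 1 by omega] at tail
    have term_dvd : (X : R⟦X⟧) ^ j ∣ jacobiTerm X j := (pow_dvd_pow X le_choose).mul_left _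
    have pow_split : (X : R⟦X⟧) ^ (n + 1) = X ^ j * X ^ (n - j + 1) := by
      rw [← pow_add]; congr 1; omega
    rw [mul_assoc, ← mul_sub_one, pow_split]
    exact mul_dvd_mul term_dvd tail
  simpa using to_finite.add finite_jacobi

theorem hasSum_jacobiTerm : HasSum (jacobiTerm (X : R⟦X⟧)) (eulerFunction R ^ 3) := by
  refine (WithPiTopology.hasSum_iff_hasSum_coeff R).2 fun d ↦ ?_
  have truncated := X_pow_dvd_iff.1 (X_pow_dvd_eulerFunction_pow_three_sub R d) d d.lt_succ_self
  rw [map_sub, sub_eq_zero, map_sum] at truncated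
  rw [truncated]
  refine hasSum_sum_of_ne_finset_zero fun j hj ↦ ?_
  rw [mem_range] at hj
  rw [coeff_jacobiTerm_X, if_neg (by rw [succ_choose_two]; omega)]

end EulerFunction

section GeneratingFunction

variable (R : Type*) [CommRing R]

/-- The sum of `X ^ n` over all multiples `n` of `m`, which is `1 / (1 - X ^ m)` for positive
`m`. -/
def geomSeries (m : ℕ) : R⟦X⟧ := PowerSeries.mk fun n ↦ if m ∣ n then 1 else 0

theorem geomSeries_mul_one_sub_X_pow {m : ℕ} (hm : m ≠ 0) :
    geomSeries R m * (1 - X ^ m) = 1 := by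
  have expand_mk_one : geomSeries R m = expand m hm (PowerSeries.mk 1) := by
    ext n
    simp [geomSeries, coeff_expand]
  rw [expand_mk_one, ← expand_X m hm, ← map_one (expand m hm), ← map_sub, ← map_mul,
    mk_one_mul_one_sub_eq_one]

theorem card_filter_dvd_finsuppAntidiag {σ : Type*} [DecidableEq σ] (s : Finset σ) {w : σ → ℕ}
    (hw : ∀ x, 0 < w x) (d : ℕ) :
    #{l ∈ finsuppAntidiag s d | ∀ x ∈ s, w x ∣ l x} =
      Nat.card {f : σ →₀ ℕ // f.support ⊆ s ∧ (f.sum fun x m ↦ w x * m) = d} := by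
  have sum_smul {f : σ →₀ ℕ} (hf : f.support ⊆ s) :
      (f.sum fun x m ↦ w x * m) = ∑ x ∈ s, (w • f) x :=
    Finsupp.sum_of_support_subset f hf _ fun _ _ ↦ mul_zero _
  have support_smul (f : σ →₀ ℕ) : (w • f).support = f.support := by
    ext x
    simp [(hw x).ne']
  rw [← Nat.card_eq_finsetCard, eq_comm]
  refine Nat.card_eq_of_bijective (fun f ↦ ⟨w • f.1, ?_⟩) ⟨fun f g hfg ↦ ?_, fun l ↦ ?_⟩
  · obtain ⟨f, hf, hsum⟩ := f
    rw [mem_filter, mem_finsuppAntidiag, ← sum_smul hf, support_smul]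
    exact ⟨⟨hsum, hf⟩, fun x _ ↦ dvd_mul_right _ _⟩
  · ext x
    exact Nat.eq_of_mul_eq_mul_left (hw x) (DFunLike.congr_fun (Subtype.ext_iff.1 hfg) x)
  · obtain ⟨l, hl⟩ := l
    rw [mem_filter, mem_finsuppAntidiag] at hl
    obtain ⟨⟨hsum, hsupp⟩, hdvd⟩ := hl
    let f := Finsupp.onFinset s (fun x ↦ l x / w x) fun x hx ↦
      hsupp (Finsupp.mem_support_iff.2 fun h0 ↦ hx (by rw [h0, Nat.zero_div]))
    have smul_f : w • f = l := by
      ext x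
      by_cases hx : x ∈ s
      · exact Nat.mul_div_cancel' (hdvd x hx)
      · have l_zero : l x = 0 := Finsupp.notMem_support_iff.1 fun h ↦ hx (hsupp h)
        simp [f, l_zero]
    refine ⟨⟨f, Finsupp.support_onFinset_subset, ?_⟩, Subtype.ext smul_f⟩
    rw [sum_smul Finsupp.support_onFinset_subset, smul_f, hsum]

theorem coeff_prod_geomSeries {σ : Type*} (s : Finset σ) {w : σ → ℕ} (hw : ∀ x, 0 < w x) (d : ℕ) :
    coeff d (∏ x ∈ s, geomSeries R (w x)) =
      Nat.card {f : σ →₀ ℕ // f.support ⊆ s ∧ (f.sum fun x m ↦ w x * m) = d} := by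
  classical
  rw [← card_filter_dvd_finsuppAntidiag s hw, PowerSeries.coeff_prod, ← sum_boole]
  simp only [geomSeries, coeff_mk, prod_boole]

/-- The coloured parts of size at most `N`. -/
def partsUpTo (r N : ℕ) : Finset (ℕ+ × Fin r) :=
  (range N).map ⟨Nat.succPNat, Nat.succPNat_injective⟩ ×ˢ univ

theorem mem_partsUpTo {r N : ℕ} {x : ℕ+ × Fin r} : x ∈ partsUpTo r N ↔ (x.1 : ℕ) ≤ N := by
  simp only [partsUpTo, mem_product, mem_univ, and_true, mem_map, mem_range,
    Function.Embedding.coeFn_mk]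
  refine ⟨?_, fun h ↦ ⟨x.1.natPred, ?_, x.1.succPNat_natPred⟩⟩
  · rintro ⟨a, ha, hax⟩
    rw [← hax]
    exact ha
  · rw [← x.1.natPred_add_one] at h
    exact h

theorem support_subset_partsUpTo {r d N : ℕ} (hd : d ≤ N) {f : ℕ+ × Fin r →₀ ℕ}
    (hf : (f.sum fun x m ↦ (x.1 : ℕ) * m) = d) : f.support ⊆ partsUpTo r N := by
  intro x hx
  have part_le : (x.1 : ℕ) * f x ≤ d :=
    hf ▸ single_le_sum (f := fun x ↦ (x.1 : ℕ) * f x) (fun _ _ ↦ Nat.zero_le _) hx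
  have mult_pos : 0 < f x := Nat.pos_of_ne_zero (Finsupp.mem_support_iff.1 hx)
  exact mem_partsUpTo.2 ((Nat.le_mul_of_pos_right _ mult_pos).trans (part_le.trans hd))

theorem coeff_prod_partsUpTo_geomSeries {r d N : ℕ} (hd : d ≤ N) :
    coeff d (∏ x ∈ partsUpTo r N, geomSeries R x.1) = colouredPartitions r d := by
  rw [coeff_prod_geomSeries R (partsUpTo r N) fun x ↦ x.1.pos, colouredPartitions]
  simp only [and_iff_right_of_imp (support_subset_partsUpTo hd)]

theorem prod_partsUpTo_geomSeries_mul_qPochhammer_pow (r N : ℕ) :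
    (∏ x ∈ partsUpTo r N, geomSeries R x.1) * qPochhammer X N ^ r = 1 := by
  have regroup : ∏ x ∈ partsUpTo r N, geomSeries R x.1 =
      (∏ i ∈ range N, geomSeries R (i + 1)) ^ r := by
    simp [partsUpTo, prod_product, prod_pow]
  rw [regroup, ← mul_pow, qPochhammer, ← prod_mul_distrib,
    prod_eq_one fun i _ ↦ geomSeries_mul_one_sub_X_pow R i.succ_ne_zero, one_pow]

/-- The generating function of the numbers of `r`-colour partitions, with coefficients in `R`. -/
noncomputable def colouredPartitionSeries (r : ℕ) : R⟦X⟧ :=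
  PowerSeries.mk fun n ↦ (colouredPartitions r n : R)

theorem colouredPartitionSeries_mul_eulerFunction_pow [TopologicalSpace R] [T2Space R] (r : ℕ) :
    colouredPartitionSeries R r * eulerFunction R ^ r = 1 := by
  ext d
  set G := ∏ x ∈ partsUpTo r d, geomSeries R x.1
  have series_dvd : (X : R⟦X⟧) ^ (d + 1) ∣ colouredPartitionSeries R r - G := by
    refine X_pow_dvd_iff.2 fun e he ↦ ?_
    rw [map_sub, coeff_prod_partsUpTo_geomSeries R (Nat.lt_succ_iff.1 he),
      colouredPartitionSeries, coeff_mk, sub_self]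
  have euler_dvd : (X : R⟦X⟧) ^ (d + 1) ∣ eulerFunction R ^ r - qPochhammer X d ^ r :=
    (X_pow_dvd_eulerFunction_sub R le_rfl).trans (sub_dvd_pow_sub_pow _ _ r)
  have product_dvd : (X : R⟦X⟧) ^ (d + 1) ∣
      colouredPartitionSeries R r * eulerFunction R ^ r - 1 := by
    convert (series_dvd.mul_right (eulerFunction R ^ r)).add (euler_dvd.mul_left G) using 1
    linear_combination prod_partsUpTo_geomSeries_mul_qPochhammer_pow R r d
  have coeff_sub := X_pow_dvd_iff.1 product_dvd d d.lt_succ_self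
  rwa [map_sub, sub_eq_zero] at coeff_sub

end GeneratingFunction

section Congruence

theorem coeff_mul_expand_eq_zero {R : Type*} [CommRing R] {p n : ℕ} (hp : p ≠ 0) {f : R⟦X⟧}
    (hf : ∀ a, a ≡ n [MOD p] → coeff a f = 0) (g : R⟦X⟧) : coeff n (f * expand p hp g) = 0 := by
  rw [coeff_mul]
  refine sum_eq_zero fun ⟨a, b⟩ hab ↦ ?_
  rw [HasAntidiagonal.mem_antidiagonal] at hab
  by_cases hb : p ∣ b
  · have a_modEq : a ≡ n [MOD p] := by
      simpa [← hab] using ((Nat.modEq_zero_iff_dvd.2 hb).add_left a).symm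
    rw [hf a a_modEq, zero_mul]
  · rw [coeff_expand_of_not_dvd p hp g hb, mul_zero]

theorem coeff_eulerFunction_pow_three_eq_zero {N d : ℕ}
    (hd : ∀ x : ZMod N, x ^ 2 = 8 * d + 1 → x = 0) :
    coeff d (eulerFunction (ZMod N) ^ 3) = 0 := by
  have jacobi := (WithPiTopology.hasSum_iff_hasSum_coeff (ZMod N)).1 (hasSum_jacobiTerm (ZMod N)) d
  have term_zero (j : ℕ) : coeff d (jacobiTerm (X : (ZMod N)⟦X⟧) j) = 0 := by
    rw [coeff_jacobiTerm_X]
    split_ifs with hdj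
    · have square : (2 * j + 1 : ZMod N) ^ 2 = 8 * d + 1 := by
        rw [hdj]
        exact_mod_cast congrArg Nat.cast (eight_mul_succ_choose_two_add_one j).symm
      rw [hd _ square, mul_zero]
    · rfl
  simp only [term_zero] at jacobi
  exact jacobi.unique hasSum_zero

variable {p : ℕ} [Fact p.Prime]

theorem pow_prime_eq_expand (f : (ZMod p)⟦X⟧) : f ^ p = expand p (NeZero.ne p) f := by
  have h := MvPowerSeries.map_frobenius_expand p (NeZero.ne p) (f := f)
  rw [ZMod.frobenius_zmod, MvPowerSeries.map_id] at h
  exact h.symm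

theorem colouredPartitionSeries_eq_mul_expand {r m : ℕ} (hm : r + 3 = p * m) :
    colouredPartitionSeries (ZMod p) r = eulerFunction (ZMod p) ^ 3 *
      expand p (NeZero.ne p) (colouredPartitionSeries (ZMod p) m) := by
  set E := eulerFunction (ZMod p)
  have inv_r := colouredPartitionSeries_mul_eulerFunction_pow (ZMod p) r
  have inv_m : expand p (NeZero.ne p) (colouredPartitionSeries (ZMod p) m) * E ^ (r + 3) = 1 := by
    rw [hm, mul_comm p m, pow_mul, pow_prime_eq_expand, ← map_mul,
      colouredPartitionSeries_mul_eulerFunction_pow, map_one]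
  linear_combination E ^ 3 * expand p (NeZero.ne p) (colouredPartitionSeries (ZMod p) m) * inv_r
    - colouredPartitionSeries (ZMod p) r * inv_m

theorem colouredPartitions_cong_mod5_2_general {r n : ℕ} (hr : p ∣ r + 3)
    (hn : ∀ x : ZMod p, x ^ 2 = 8 * n + 1 → x = 0) : p ∣ colouredPartitions r n := by
  obtain ⟨m, hm⟩ := hr
  have coeff_zero : coeff n (colouredPartitionSeries (ZMod p) r) = 0 := by
    rw [colouredPartitionSeries_eq_mul_expand hm]
    refine coeff_mul_expand_eq_zero _ (fun a ha ↦ ?_) _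
    rw [← ZMod.natCast_eq_natCast_iff] at ha
    exact coeff_eulerFunction_pow_three_eq_zero (by rwa [ha])
  rwa [colouredPartitionSeries, coeff_mk, ZMod.natCast_eq_zero_iff] at coeff_zero

end Congruence

theorem colouredPartitions_cong_mod5_2 (k n i : ℕ) (hi : i = 2 ∨ i = 3 ∨ i = 4) :
    5 ∣ colouredPartitions (5 * k + 2) (5 * n + i) := by
  have not_square : ∀ x : ZMod 5, x ^ 2 = 8 * (5 * n + i : ℕ) + 1 → x = 0 := by
    have five_eq_zero : (5 : ZMod 5) = 0 := rfl
    rcases hi with rfl | rfl | rfl <;> push_cast <;> rw [five_eq_zero, zero_mul] <;> decide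
  have : Fact (Nat.Prime 5) := ⟨Nat.prime_five⟩
  exact colouredPartitions_cong_mod5_2_general ⟨k + 1, by ring⟩ not_square
end

section
/- For every non-negative integer k, every non-negative integer n, and every j ∈ {2, 4, 5, 6}, the number of (7k+4)-colour partitions of 7n+j is divisible by 7; that is, p_{7k+4}(7n+j) ≡ 0 (mod 7). -/
/-!
Write `φ = ∏ (1 - q ^ m)`, which is `PowerSeries.pentagonalSeries`, so that
`∑ p_r(n) q ^ n = φ ^ (-r)`. If a prime `p` divides `r + 3`, then `φ ^ (-r)` is `φ ^ 3` times a
`p`-th power, and modulo `p` the latter is a series in `q ^ p`. By Jacobi's identity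
`φ ^ 3 = ∑_{d ≥ 0} (-1) ^ d (2 d + 1) q ^ (d (d + 1) / 2)`, and
`8 · d (d + 1) / 2 + 1 = (2 d + 1) ^ 2`, so `p ∣ p_r(n)` as soon as `8 n + 1` is not a nonzero
square modulo `p`. For `p = 7` this excludes only `n ≡ 0, 1, 3`.

Jacobi's identity is the derivative at `z = 1` of the triple product identity. Differentiating the
finite triple product instead, and comparing modulo `q ^ (M + 1)`, avoids any series in `z`.
-/

open Finset PowerSeries

namespace ColouredPartitions

section TriangularNumbers

/-- The triangular number `d (d + 1) / 2`, for an integer `d` of either sign. -/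
def triangular (d : ℤ) : ℕ := (d * (d + 1) / 2).toNat

theorem two_mul_natCast_triangular (d : ℤ) : 2 * (triangular d : ℤ) = d * (d + 1) := by
  have hnonneg : 0 ≤ d * (d + 1) := by
    rcases le_or_gt 0 d with h | h <;> nlinarith
  rw [triangular, Int.toNat_of_nonneg (by positivity)]
  exact Int.two_mul_ediv_two_of_even (Int.even_mul_succ_self d)

theorem natCast_triangular_add_one (d : ℤ) :
    (triangular (d + 1) : ℤ) = triangular d + (d + 1) := by
  linarith [two_mul_natCast_triangular d, two_mul_natCast_triangular (d + 1)]

theorem triangular_neg_sub_one (d : ℤ) : triangular (-d - 1) = triangular d := by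
  rw [triangular, triangular]
  ring_nf

theorem le_triangular (d : ℕ) : d ≤ triangular d := by
  have h := two_mul_natCast_triangular d
  rcases d with _ | d
  · exact Nat.zero_le _
  · push_cast at h ⊢
    zify
    nlinarith

end TriangularNumbers

section QPochhammer

variable {A : Type*} [CommRing A]

/-- The `q`-Pochhammer symbol `(q; q)ₙ = (1 - q) (1 - q ^ 2) ⋯ (1 - q ^ n)`. -/
def qPochhammer (q : A) (n : ℕ) : A := ∏ i ∈ range n, (1 - q ^ (i + 1))

theorem qPochhammer_zero (q : A) : qPochhammer q 0 = 1 := prod_range_zero _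

theorem qPochhammer_succ (q : A) (n : ℕ) :
    qPochhammer q (n + 1) = qPochhammer q n * (1 - q ^ (n + 1)) := prod_range_succ _ n

theorem pow_dvd_qPochhammer_sub {m n : ℕ} (q : A) (h : m ≤ n) :
    q ^ (m + 1) ∣ qPochhammer q n - qPochhammer q m := by
  induction n, h using Nat.le_induction with
  | base => simp
  | succ n hmn ih =>
    have hpow : q ^ (m + 1) ∣ q ^ (n + 1) := pow_dvd_pow q (by lia)
    rw [qPochhammer_succ, mul_one_sub, sub_right_comm]
    exact dvd_sub ih (hpow.mul_left _)

end QPochhammer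

section FiniteTripleProduct

variable {A : Type*} [CommRing A] (q : A)

/-- The finite Jacobi triple product `∏_{i < a} (z - q ^ i) * ∏_{i < b} (1 - q ^ (i + 1) z)`, as a
polynomial in `z`. -/
noncomputable def tripleProduct (a b : ℕ) : Polynomial A :=
  (∏ i ∈ range a, (Polynomial.X - Polynomial.C (q ^ i))) *
    ∏ i ∈ range b, (1 - Polynomial.C (q ^ (i + 1)) * Polynomial.X)

theorem tripleProduct_succ_left (a b : ℕ) :
    tripleProduct q (a + 1) b =
      tripleProduct q a b * (Polynomial.X - Polynomial.C (q ^ a)) := by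
  rw [tripleProduct, prod_range_succ, mul_right_comm, tripleProduct]

theorem tripleProduct_succ_right (a b : ℕ) :
    tripleProduct q a (b + 1) =
      tripleProduct q a b * (1 - Polynomial.C (q ^ (b + 1)) * Polynomial.X) := by
  rw [tripleProduct, prod_range_succ, ← mul_assoc, tripleProduct]

theorem natDegree_tripleProduct_le (a b : ℕ) : (tripleProduct q a b).natDegree ≤ a + b := by
  have hprod (f : ℕ → Polynomial A) (hf : ∀ i, (f i).natDegree ≤ 1) (n : ℕ) :
      (∏ i ∈ range n, f i).natDegree ≤ n :=
    (Polynomial.natDegree_prod_le _ _).trans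
      ((sum_le_card_nsmul _ _ 1 fun i _ ↦ hf i).trans (by simp))
  exact Polynomial.natDegree_mul_le_of_le
    (hprod _ (fun _ ↦ Polynomial.natDegree_X_sub_C_le _) a) (hprod _ (fun _ ↦ by compute_degree) b)

theorem coeff_zero_tripleProduct_succ_left (a b : ℕ) :
    (tripleProduct q (a + 1) b).coeff 0 = -q ^ a * (tripleProduct q a b).coeff 0 := by
  rw [tripleProduct_succ_left, Polynomial.mul_coeff_zero, Polynomial.coeff_sub,
    Polynomial.coeff_X_zero, Polynomial.coeff_C_zero, zero_sub, mul_comm]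

theorem coeff_zero_tripleProduct_succ_right (a b : ℕ) :
    (tripleProduct q a (b + 1)).coeff 0 = (tripleProduct q a b).coeff 0 := by
  simp [tripleProduct_succ_right, Polynomial.mul_coeff_zero]

theorem coeff_tripleProduct_succ_left (a b k : ℕ) :
    (tripleProduct q (a + 1) b).coeff (k + 1) =
      (tripleProduct q a b).coeff k - q ^ a * (tripleProduct q a b).coeff (k + 1) := by
  rw [tripleProduct_succ_left, Polynomial.coeff_mul_X_sub_C, mul_comm]

theorem coeff_tripleProduct_succ_right (a b k : ℕ) :
    (tripleProduct q a (b + 1)).coeff (k + 1) =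
      (tripleProduct q a b).coeff (k + 1) - q ^ (b + 1) * (tripleProduct q a b).coeff k := by
  rw [tripleProduct_succ_right, mul_one_sub, mul_left_comm, Polynomial.coeff_sub,
    Polynomial.coeff_C_mul, Polynomial.coeff_mul_X]

theorem pow_mul_pow_triangular {m n : ℕ} {d : ℤ} (h : (n : ℤ) = m + d) :
    q ^ m * q ^ triangular d = q ^ n * q ^ triangular (d - 1) := by
  have hd := natCast_triangular_add_one (d - 1)
  rw [sub_add_cancel] at hd
  rw [← pow_add, ← pow_add]
  congr 1
  lia

variable {q} in
theorem coeff_mul_qPochhammer_of_natDegree_le {P : Polynomial A} {n : ℕ} {v : ℕ → A}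
    (hdeg : P.natDegree ≤ n)
    (hcoeff : ∀ k l, k + l = n → P.coeff k * (qPochhammer q k * qPochhammer q l) = v k)
    {k l : ℕ} (h : k + l = n + 1) :
    P.coeff k * (qPochhammer q k * qPochhammer q l) = (1 - q ^ l) * v k := by
  rcases l with _ | l
  · rw [Polynomial.coeff_eq_zero_of_natDegree_lt (by lia)]
    ring
  · rw [qPochhammer_succ, ← hcoeff k l (by lia)]
    ring

theorem coeff_tripleProduct_zero_right_mul {a k l : ℕ} (h : k + l = a) :
    (tripleProduct q a 0).coeff k * (qPochhammer q k * qPochhammer q l) =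
      (-1) ^ (a + k) * q ^ triangular (k - a) * qPochhammer q a := by
  induction a generalizing k l with
  | zero =>
    obtain ⟨rfl, rfl⟩ : k = 0 ∧ l = 0 := by lia
    simp [tripleProduct, triangular, qPochhammer_zero]
  | succ a ih =>
    have hold := coeff_mul_qPochhammer_of_natDegree_le
      (natDegree_tripleProduct_le q a 0) (fun _ _ ↦ ih) h
    have hpow := pow_mul_pow_triangular q (m := a) (n := k) (d := k - a) (by lia)
    rw [sub_sub, ← Nat.cast_succ] at hpow
    have hqpow : q ^ (a + 1) = q ^ k * q ^ l := by rw [← pow_add, h]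
    rw [qPochhammer_succ q a, hqpow]
    rcases k with _ | k
    · rw [coeff_zero_tripleProduct_succ_left]
      linear_combination -q ^ a * hold - (-1) ^ a * qPochhammer q a * (1 - q ^ l) * hpow
    · have hshift := ih (k := k) (l := l) (by lia)
      rw [show (k - a : ℤ) = (k + 1 : ℕ) - (a + 1 : ℕ) by lia] at hshift
      rw [coeff_tripleProduct_succ_left]
      rw [qPochhammer_succ] at hold ⊢
      linear_combination (1 - q ^ (k + 1)) * hshift - q ^ a * hold +
        (-1) ^ (a + k) * qPochhammer q a * (1 - q ^ l) * hpow

/-- The `q`-binomial theorem, with the denominators of the Gaussian binomial coefficient cleared so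
that it holds for every `q`. -/
theorem coeff_tripleProduct_mul {a b k l : ℕ} (h : k + l = a + b) :
    (tripleProduct q a b).coeff k * (qPochhammer q k * qPochhammer q l) =
      (-1) ^ (a + k) * q ^ triangular (k - a) * qPochhammer q (a + b) := by
  induction b generalizing k l with
  | zero => exact coeff_tripleProduct_zero_right_mul q h
  | succ b ih =>
    have hold := coeff_mul_qPochhammer_of_natDegree_le
      (natDegree_tripleProduct_le q a b) (fun _ _ ↦ ih) h
    have hpow := pow_mul_pow_triangular q (m := l) (n := b + 1) (d := k - a) (by lia)
    have hqpow : q ^ (a + b + 1) = q ^ k * q ^ l := by rw [← pow_add, h, add_assoc]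
    rw [← add_assoc, qPochhammer_succ q (a + b), hqpow]
    rcases k with _ | k
    · rw [coeff_zero_tripleProduct_succ_right]
      linear_combination hold
    · have hshift := ih (k := k) (l := l) (by lia)
      rw [show (k - a : ℤ) = (k + 1 : ℕ) - a - 1 by lia] at hshift
      rw [coeff_tripleProduct_succ_right]
      rw [qPochhammer_succ] at hold ⊢
      linear_combination hold - q ^ (b + 1) * (1 - q ^ (k + 1)) * hshift +
        (-1) ^ (a + k) * qPochhammer q (a + b) * (1 - q ^ (k + 1)) * hpow

theorem eval_one_derivative_tripleProduct (M : ℕ) :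
    (Polynomial.derivative (tripleProduct q (M + 1) M)).eval 1 = qPochhammer q M ^ 2 := by
  have hfactor : tripleProduct q (M + 1) M = (Polynomial.X - 1) *
      ((∏ i ∈ range M, (Polynomial.X - Polynomial.C (q ^ (i + 1)))) *
        ∏ i ∈ range M, (1 - Polynomial.C (q ^ (i + 1)) * Polynomial.X)) := by
    rw [tripleProduct, prod_range_succ', pow_zero, Polynomial.C_1]
    ring
  rw [hfactor, Polynomial.derivative_mul]
  simp [Polynomial.eval_prod, qPochhammer, sq]

theorem qPochhammer_sq_eq_sum_coeff_tripleProduct (M : ℕ) :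
    qPochhammer q M ^ 2 = ∑ d ∈ range (M + 1),
      (((M + 1 + d : ℕ) : A) * (tripleProduct q (M + 1) M).coeff (M + 1 + d) +
        ((M - d : ℕ) : A) * (tripleProduct q (M + 1) M).coeff (M - d)) := by
  have hdeg : (tripleProduct q (M + 1) M).natDegree < M + 1 + (M + 1) :=
    (natDegree_tripleProduct_le q (M + 1) M).trans_lt (by lia)
  have hreflect := sum_range_reflect
    (fun k ↦ (k : A) * (tripleProduct q (M + 1) M).coeff k) (M + 1)
  rw [← eval_one_derivative_tripleProduct, Polynomial.derivative_eval,
    Polynomial.sum_over_range' _ (by simp) _ hdeg, sum_range_add, sum_add_distrib, add_comm]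
  simp only [one_pow, mul_one, mul_comm _ (Nat.cast _)]
  rw [← hreflect]
  simp

end FiniteTripleProduct

section JacobiIdentity

variable {R : Type*} [CommRing R]

theorem isUnit_qPochhammer_X (n : ℕ) : IsUnit (qPochhammer (X : R⟦X⟧) n) := by
  rw [isUnit_iff_constantCoeff]
  simp [qPochhammer]

theorem X_pow_dvd_pentagonalSeries_sub_qPochhammer {m n : ℕ} (h : m ≤ n) :
    (X : R⟦X⟧) ^ (m + 1) ∣ pentagonalSeries R - qPochhammer X n := by
  rw [X_pow_dvd_iff]
  intro i hi
  obtain ⟨N, hN, hcoeff⟩ := ((Filter.tendsto_finset_range.eventually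
    (coeff_prod_one_sub_X_pow_eventually_eq R i)).and (Filter.eventually_ge_atTop n)).exists
  have hdvd := pow_dvd_qPochhammer_sub (X : R⟦X⟧) hcoeff
  have hdiff := X_pow_dvd_iff.1 hdvd i (by lia)
  rwa [map_sub, qPochhammer, hN] at hdiff

theorem coeff_tripleProduct_X_sub {M d : ℕ} (h : d ≤ M) :
    (tripleProduct (X : R⟦X⟧) (M + 1) M).coeff (M - d) =
      -(tripleProduct (X : R⟦X⟧) (M + 1) M).coeff (M + 1 + d) := by
  have hleft := coeff_tripleProduct_mul (X : R⟦X⟧) (a := M + 1) (b := M) (k := M - d)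
    (l := M + 1 + d) (by lia)
  have hright := coeff_tripleProduct_mul (X : R⟦X⟧) (a := M + 1) (b := M) (k := M + 1 + d)
    (l := M - d) (by lia)
  have hexp : triangular ((M - d : ℕ) - (M + 1 : ℕ)) =
      triangular ((M + 1 + d : ℕ) - (M + 1 : ℕ)) := by
    rw [← triangular_neg_sub_one]
    congr 1
    lia
  have hsign : (-1 : R⟦X⟧) ^ (M + 1 + (M - d)) = (-1) ^ (M + 1 + (M + 1 + d) + 1) :=
    neg_one_pow_congr (by grind)
  rw [hexp, hsign] at hleft
  refine ((isUnit_qPochhammer_X (M - d)).mul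
    (isUnit_qPochhammer_X (M + 1 + d))).mul_left_injective ?_
  linear_combination hleft + hright

theorem qPochhammer_X_sq_eq_sum (M : ℕ) :
    qPochhammer (X : R⟦X⟧) M ^ 2 = ∑ d ∈ range (M + 1),
      (2 * d + 1) * (tripleProduct (X : R⟦X⟧) (M + 1) M).coeff (M + 1 + d) := by
  rw [qPochhammer_sq_eq_sum_coeff_tripleProduct]
  refine sum_congr rfl fun d hd ↦ ?_
  have hdM : d ≤ M := mem_range_succ_iff.1 hd
  rw [coeff_tripleProduct_X_sub hdM]
  push_cast [hdM]
  ring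

theorem X_pow_dvd_qPochhammer_mul_pentagonalSeries_sub {l m n : ℕ} (hm : l ≤ m) (hn : l ≤ n) :
    (X : R⟦X⟧) ^ (l + 1) ∣
      qPochhammer X n * pentagonalSeries R - qPochhammer X m * qPochhammer X l := by
  have hl := X_pow_dvd_pentagonalSeries_sub_qPochhammer (R := R) le_rfl (m := l)
  have hnm := dvd_sub (pow_dvd_qPochhammer_sub (X : R⟦X⟧) hn) (pow_dvd_qPochhammer_sub X hm)
  convert dvd_add (hl.mul_left (qPochhammer X m)) (hnm.mul_left (pentagonalSeries R)) using 1
  ring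

theorem X_pow_dvd_coeff_tripleProduct_mul_pentagonalSeries_sub {M d : ℕ} (h : d ≤ M) :
    (X : R⟦X⟧) ^ (M + 1) ∣
      (tripleProduct (X : R⟦X⟧) (M + 1) M).coeff (M + 1 + d) * pentagonalSeries R -
        (-1) ^ d * X ^ triangular d := by
  have hcoeff := coeff_tripleProduct_mul (X : R⟦X⟧) (a := M + 1) (b := M) (k := M + 1 + d)
    (l := M - d) (by lia)
  have hsign : (-1 : R⟦X⟧) ^ (M + 1 + (M + 1 + d)) = (-1) ^ d := neg_one_pow_congr (by grind)
  have hindex : ((M + 1 + d : ℕ) - (M + 1 : ℕ) : ℤ) = d := by lia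
  rw [hsign, hindex] at hcoeff
  have hpow : (X : R⟦X⟧) ^ (M + 1) ∣ X ^ triangular d * X ^ (M - d + 1) := by
    rw [← pow_add]
    exact pow_dvd_pow _ (by have := le_triangular d; lia)
  have hdvd := hpow.trans (mul_dvd_mul_left _
    (X_pow_dvd_qPochhammer_mul_pentagonalSeries_sub (R := R) (l := M - d) (m := M + 1 + d)
      (n := M + 1 + M) (by lia) (by lia)))
  rw [← ((isUnit_qPochhammer_X (M + 1 + d)).mul (isUnit_qPochhammer_X (M - d))).dvd_mul_right]
  convert hdvd.mul_left ((-1) ^ d) using 1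
  linear_combination pentagonalSeries R * hcoeff

theorem X_pow_dvd_pentagonalSeries_cube_sub (M : ℕ) :
    (X : R⟦X⟧) ^ (M + 1) ∣ pentagonalSeries R ^ 3 -
      ∑ d ∈ range (M + 1), (2 * (d : R⟦X⟧) + 1) * ((-1) ^ d * X ^ triangular d) := by
  have hsum : (X : R⟦X⟧) ^ (M + 1) ∣ qPochhammer X M ^ 2 * pentagonalSeries R -
      ∑ d ∈ range (M + 1), (2 * (d : R⟦X⟧) + 1) * ((-1) ^ d * X ^ triangular d) := by
    rw [qPochhammer_X_sq_eq_sum, sum_mul, ← sum_sub_distrib]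
    refine dvd_sum fun d hd ↦ ?_
    rw [mul_assoc, ← mul_sub]
    exact (X_pow_dvd_coeff_tripleProduct_mul_pentagonalSeries_sub
      (mem_range_succ_iff.1 hd)).mul_left _
  have hclose := X_pow_dvd_pentagonalSeries_sub_qPochhammer (R := R) (le_refl M)
  convert dvd_add hsum
    (hclose.mul_left ((pentagonalSeries R + qPochhammer X M) * pentagonalSeries R)) using 1
  ring

theorem coeff_pentagonalSeries_cube (n : ℕ) :
    coeff n (pentagonalSeries R ^ 3) =
      ∑ d ∈ range (n + 1), if triangular d = n then (-1) ^ d * (2 * (d : R) + 1) else 0 := by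
  have hcoeff := X_pow_dvd_iff.1 (X_pow_dvd_pentagonalSeries_cube_sub (R := R) n) n n.lt_succ_self
  rw [map_sub, sub_eq_zero] at hcoeff
  rw [hcoeff, map_sum]
  refine sum_congr rfl fun d _ ↦ ?_
  have hterm : (2 * (d : R⟦X⟧) + 1) * ((-1) ^ d * X ^ triangular d) =
      C ((-1) ^ d * (2 * (d : R) + 1)) * X ^ triangular d := by
    simp only [map_mul, map_add, map_pow, map_neg, map_one, map_ofNat, map_natCast]
    ring
  rw [hterm, coeff_C_mul_X_pow]
  simp only [eq_comm]

theorem coeff_pentagonalSeries_cube_eq_zero {n : ℕ}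
    (hn : ∀ x : R, x ^ 2 = 8 * n + 1 → x = 0) : coeff n (pentagonalSeries R ^ 3) = 0 := by
  rw [coeff_pentagonalSeries_cube]
  refine sum_eq_zero fun d _ ↦ ?_
  split_ifs with hd
  · have hsq : (2 * (d : R) + 1) ^ 2 = 8 * n + 1 := by
      have h := congrArg (Int.cast : ℤ → R) (two_mul_natCast_triangular d)
      rw [hd] at h
      push_cast at h
      linear_combination -4 * h
    rw [hn _ hsq, mul_zero]
  · rfl

end JacobiIdentity

section GeneratingFunction

variable {R : Type*} [CommRing R]

theorem expand_mk_one_mul_one_sub_X_pow {w : ℕ} (hw : w ≠ 0) :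
    expand w hw (mk 1 : R⟦X⟧) * (1 - X ^ w) = 1 := by
  have h := congrArg (expand w hw) (mk_one_mul_one_sub_eq_one R)
  rwa [map_mul, map_sub, map_one, expand_X] at h

theorem support_pointwise_smul {ι : Type*} {w : ι → ℕ} (hw : ∀ i, w i ≠ 0) (f : ι →₀ ℕ) :
    (w • f).support = f.support := by
  ext i
  simp [hw i]

theorem exists_pointwise_smul_eq {ι : Type*} {w : ι → ℕ} {g : ι →₀ ℕ} (hg : ∀ i, w i ∣ g i) :
    ∃ f : ι →₀ ℕ, w • f = g := by
  refine ⟨Finsupp.onFinset g.support (fun i ↦ g i / w i) fun i hi ↦ ?_, ?_⟩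
  · rw [Finsupp.mem_support_iff]
    intro hzero
    simp [hzero] at hi
  · ext i
    simp [Nat.mul_div_cancel' (hg i)]

theorem pointwise_smul_mem_finsuppAntidiag_iff {ι : Type*} [DecidableEq ι] {s : Finset ι}
    {w : ι → ℕ} (hw : ∀ i, w i ≠ 0) {n : ℕ} {f : ι →₀ ℕ} :
    w • f ∈ finsuppAntidiag s n ↔ f.support ⊆ s ∧ (f.sum fun i m ↦ w i * m) = n := by
  rw [mem_finsuppAntidiag', support_pointwise_smul hw, and_comm, Finsupp.sum,
    support_pointwise_smul hw]
  rfl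

theorem coeff_prod_expand_mk_one {ι : Type*} (s : Finset ι) {w : ι → ℕ} (hw : ∀ i, w i ≠ 0)
    (n : ℕ) :
    coeff n (∏ i ∈ s, expand (w i) (hw i) (mk 1 : R⟦X⟧)) =
      Nat.card {f : ι →₀ ℕ // f.support ⊆ s ∧ (f.sum fun i m ↦ w i * m) = n} := by
  classical
  rw [coeff_prod]
  simp only [coeff_expand, coeff_mk, Pi.one_apply, prod_ite_zero, prod_const_one, sum_boole]
  congr 1
  rw [← Nat.card_eq_finsetCard]
  refine (Nat.card_congr (Equiv.ofBijective (fun f ↦ ⟨w • f.1, mem_filter.2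
    ⟨(pointwise_smul_mem_finsuppAntidiag_iff hw).2 f.2, fun i _ ↦ dvd_mul_right _ _⟩⟩)
    ⟨fun f g hfg ↦ ?_, ?_⟩)).symm
  · ext i
    simpa [hw i] using DFunLike.congr_fun (congrArg Subtype.val hfg) i
  · rintro ⟨g, hg⟩
    obtain ⟨hmem, hdvd⟩ := mem_filter.1 hg
    have hdvd_all (i : ι) : w i ∣ g i := by
      by_cases hi : i ∈ s
      · exact hdvd i hi
      · rw [Finsupp.notMem_support_iff.1 fun h ↦ hi ((mem_finsuppAntidiag.1 hmem).2 h)]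
        exact dvd_zero _
    obtain ⟨f, rfl⟩ := exists_pointwise_smul_eq hdvd_all
    exact ⟨⟨f, (pointwise_smul_mem_finsuppAntidiag_iff hw).1 hmem⟩, rfl⟩

/-- The coloured parts of size at most `M`: the factors of the generating function that matter
modulo `X ^ (M + 1)`. -/
def boundedParts (r M : ℕ) : Finset (ℕ+ × Fin r) :=
  (range M).map ⟨Nat.succPNat, Nat.succPNat_injective⟩ ×ˢ univ

theorem mem_boundedParts {r M : ℕ} {x : ℕ+ × Fin r} : x ∈ boundedParts r M ↔ (x.1 : ℕ) ≤ M := by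
  simp only [boundedParts, mem_product, mem_map, mem_range, Function.Embedding.coeFn_mk, mem_univ,
    and_true]
  constructor
  · rintro ⟨i, hi, hix⟩
    rw [← hix, Nat.succPNat_coe]
    exact hi
  · intro hx
    exact ⟨x.1.natPred, by have := x.1.natPred_add_one; lia, x.1.succPNat_natPred⟩

theorem prod_boundedParts_one_sub_pow (q : R) (r M : ℕ) :
    ∏ x ∈ boundedParts r M, (1 - q ^ (x.1 : ℕ)) = qPochhammer q M ^ r := by
  simp [boundedParts, prod_product, qPochhammer, prod_pow]

theorem support_subset_boundedParts {r n : ℕ} {f : ℕ+ × Fin r →₀ ℕ}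
    (hf : (f.sum fun x m ↦ (x.1 : ℕ) * m) = n) : f.support ⊆ boundedParts r n := by
  intro x hx
  rw [mem_boundedParts, ← hf, Finsupp.sum]
  calc (x.1 : ℕ) ≤ x.1 * f x := Nat.le_mul_of_pos_right _ (Finsupp.mem_support_iff.1 hx).bot_lt
    _ ≤ ∑ y ∈ f.support, (y.1 : ℕ) * f y :=
      single_le_sum (f := fun y ↦ (y.1 : ℕ) * f y) (fun _ _ ↦ Nat.zero_le _) hx

theorem coeff_prod_boundedParts {r n M : ℕ} (h : n ≤ M) :
    coeff n (∏ x ∈ boundedParts r M, expand (x.1 : ℕ) x.1.ne_zero (mk 1 : R⟦X⟧)) =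
      colouredPartitions r n := by
  rw [coeff_prod_expand_mk_one (boundedParts r M) (w := fun x ↦ x.1) (fun x ↦ x.1.ne_zero) n,
    colouredPartitions]
  congr 1
  refine Nat.card_congr (Equiv.subtypeEquivRight fun f ↦ and_iff_right_of_imp fun hf x hx ↦ ?_)
  exact mem_boundedParts.2 ((mem_boundedParts.1 (support_subset_boundedParts hf hx)).trans h)

theorem X_pow_dvd_mk_colouredPartitions_mul_qPochhammer_pow_sub_one (r M : ℕ) :
    (X : R⟦X⟧) ^ (M + 1) ∣
      (mk fun n ↦ (colouredPartitions r n : R)) * qPochhammer X M ^ r - 1 := by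
  have hinv : (∏ x ∈ boundedParts r M, expand (x.1 : ℕ) x.1.ne_zero (mk 1 : R⟦X⟧)) *
      qPochhammer X M ^ r = 1 := by
    rw [← prod_boundedParts_one_sub_pow, ← prod_mul_distrib]
    exact prod_eq_one fun x _ ↦ expand_mk_one_mul_one_sub_X_pow x.1.ne_zero
  rw [← hinv, ← sub_mul]
  refine Dvd.dvd.mul_right (X_pow_dvd_iff.2 fun n hn ↦ ?_) _
  rw [map_sub, coeff_mk, coeff_prod_boundedParts (Nat.le_of_lt_succ hn), sub_self]

theorem mk_colouredPartitions_mul_pentagonalSeries_pow (r : ℕ) :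
    (mk fun n ↦ (colouredPartitions r n : R)) * pentagonalSeries R ^ r = 1 := by
  refine sub_eq_zero.1 (PowerSeries.ext fun M ↦ ?_)
  have hpow := (X_pow_dvd_pentagonalSeries_sub_qPochhammer (R := R) (le_refl M)).trans
    (sub_dvd_pow_sub_pow _ _ r)
  have hdvd := dvd_add (hpow.mul_left (mk fun n ↦ (colouredPartitions r n : R)))
    (X_pow_dvd_mk_colouredPartitions_mul_qPochhammer_pow_sub_one r M)
  rw [mul_sub, sub_add_sub_cancel] at hdvd
  exact X_pow_dvd_iff.1 hdvd M M.lt_succ_self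

end GeneratingFunction

section PrimeCharacteristic

variable {R : Type*} [CommRing R] {p : ℕ} [Fact p.Prime] [CharP R p]

theorem coeff_pow_char_of_not_dvd (f : R⟦X⟧) {n : ℕ} (hn : ¬p ∣ n) : coeff n (f ^ p) = 0 := by
  have hfrob : f ^ p = (expand p (NeZero.ne p) f).map (frobenius R p) :=
    (MvPowerSeries.map_frobenius_expand p (NeZero.ne p)).symm
  rw [hfrob, coeff_map, coeff_expand_of_not_dvd _ _ _ hn, map_zero]

theorem coeff_mul_pow_char_eq_zero {f : R⟦X⟧} (g : R⟦X⟧) {n : ℕ}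
    (hf : ∀ m, m ≡ n [MOD p] → coeff m f = 0) : coeff n (f * g ^ p) = 0 := by
  rw [coeff_mul]
  refine sum_eq_zero fun ij hij ↦ ?_
  have hsum : ij.1 + ij.2 = n := mem_antidiagonal.1 hij
  by_cases hdvd : p ∣ ij.2
  · rw [hf ij.1 ((Nat.modEq_iff_dvd' (by lia)).2 (by rwa [← hsum, Nat.add_sub_cancel_left])),
      zero_mul]
  · rw [coeff_pow_char_of_not_dvd g hdvd, mul_zero]

end PrimeCharacteristic

end ColouredPartitions

open ColouredPartitions in
theorem colouredPartitions_cong_mod7_4_general {p r n : ℕ} [Fact p.Prime] (hr : p ∣ r + 3)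
    (hn : ∀ x : ZMod p, x ^ 2 = 8 * n + 1 → x = 0) : p ∣ colouredPartitions r n := by
  obtain ⟨s, hs⟩ := hr
  let gen (t : ℕ) : (ZMod p)⟦X⟧ := mk fun m ↦ (colouredPartitions t m : ZMod p)
  have hgen : gen r = pentagonalSeries (ZMod p) ^ 3 * gen s ^ p := by
    have hr_inv : gen r * pentagonalSeries (ZMod p) ^ r = 1 :=
      mk_colouredPartitions_mul_pentagonalSeries_pow r
    have hs_inv : gen s ^ p * pentagonalSeries (ZMod p) ^ (r + 3) = 1 := by
      rw [hs, mul_comm p, pow_mul, ← mul_pow, mk_colouredPartitions_mul_pentagonalSeries_pow,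
        one_pow]
    rw [pow_add] at hs_inv
    linear_combination gen s ^ p * pentagonalSeries (ZMod p) ^ 3 * hr_inv - gen r * hs_inv
  have hcoeff : coeff n (gen r) = 0 := by
    rw [hgen]
    refine coeff_mul_pow_char_eq_zero _ fun m hm ↦ coeff_pentagonalSeries_cube_eq_zero ?_
    rwa [(ZMod.natCast_eq_natCast_iff m n p).2 hm]
  rw [← ZMod.natCast_eq_zero_iff]
  simpa only [gen, coeff_mk] using hcoeff

theorem colouredPartitions_cong_mod7_4 (k n j : ℕ) (hj : j = 2 ∨ j = 4 ∨ j = 5 ∨ j = 6) :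
    7 ∣ colouredPartitions (7 * k + 4) (7 * n + j) := by
  have hsquare : ∀ x : ZMod 7, x ^ 2 = 8 * (7 * n + j : ℕ) + 1 → x = 0 := by
    have hseven : (7 : ZMod 7) = 0 := rfl
    rcases hj with rfl | rfl | rfl | rfl <;> push_cast <;> rw [hseven, zero_mul] <;> decide
  have : Fact (Nat.Prime 7) := ⟨by norm_num⟩
  exact colouredPartitions_cong_mod7_4_general ⟨k + 1, by ring⟩ hsquare
end
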